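/- Let f ∈ k[X_1,…,X_r] be an irreducible polynomial (r ≥ 1). Then: (a) there exists m ∈ ℤ^r with τ_m f ≠ f, i.e. Ξ_f is a proper subgroup of ℤ^r; and (b) for every m ∈ ℤ^r and every integer n ≥ 1, if τ_{n·m} f = f then τ_m f = f. Consequently the quotient group ℤ^r/Ξ_f is a torsion-free (hence free) finitely generated abelian group of positive rank. -/

import Mathlib

open MvPolynomial

noncomputable section

/-- Translation of a polynomial: `(τ_m f)(X) = f(X₁ + m₁, …, X_r + m_r)`. -/
def polyTranslate (k : Type*) [CommRing k] {r : ℕ} (m : Fin r → ℤ) :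
    MvPolynomial (Fin r) k →ₐ[k] MvPolynomial (Fin r) k :=
  aeval fun i => X i + C ((m i : ℤ) : k)

def lineTranslate (k : Type*) [CommRing k] {r : ℕ} (m : Fin r → ℤ) :
    MvPolynomial (Fin r) k →ₐ[k] Polynomial (MvPolynomial (Fin r) k) :=
  aeval fun i => Polynomial.C (X i) + Polynomial.X * Polynomial.C (C ((m i : ℤ) : k))

theorem eval_lineTranslate (k : Type*) [CommRing k] {r : ℕ} (m : Fin r → ℤ) (t : ℤ)
    (f : MvPolynomial (Fin r) k) :
    (lineTranslate k m f).eval ((t : ℤ) : MvPolynomial (Fin r) k)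
      = polyTranslate k (fun i => t * m i) f := by
  induction f using MvPolynomial.induction_on with
  | C a => simp [lineTranslate, polyTranslate, MvPolynomial.algebraMap_eq,
      Polynomial.algebraMap_apply]
  | add p q hp hq => simp [hp, hq]
  | mul_X p i hp =>
    rw [map_mul, map_mul, Polynomial.eval_mul, hp]
    simp [lineTranslate, polyTranslate]

theorem polyTranslate_add (k : Type*) [CommRing k] {r : ℕ} (m n : Fin r → ℤ)
    (f : MvPolynomial (Fin r) k) :
    polyTranslate k m (polyTranslate k n f) = polyTranslate k (fun i => m i + n i) f := by
  induction f using MvPolynomial.induction_on with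
  | C a => simp [polyTranslate, MvPolynomial.algebraMap_eq]
  | add p q hp hq => simp [hp, hq]
  | mul_X p i hp =>
    rw [map_mul, map_mul, map_mul, hp]
    simp [polyTranslate, MvPolynomial.algebraMap_eq, add_assoc]

theorem eval_polyTranslate (k : Type*) [CommRing k] {r : ℕ} (m : Fin r → ℤ)
    (f : MvPolynomial (Fin r) k) :
    eval 0 (polyTranslate k m f) = eval (fun i => ((m i : ℤ) : k)) f := by
  induction f using MvPolynomial.induction_on with
  | C a => simp [polyTranslate, MvPolynomial.algebraMap_eq]
  | add p q hp hq => rw [map_add, map_add, map_add, hp, hq]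
  | mul_X p i hp =>
    rw [map_mul, map_mul, map_mul, hp]
    simp [polyTranslate]

theorem irreducible_translation_group (k : Type*) [Field k] [CharZero k] {r : ℕ}
    (hr : 1 ≤ r) (f : MvPolynomial (Fin r) k) (hf : Irreducible f) :
    -- (a) Ξ_f is a proper subgroup of ℤ^r
    (∃ m : Fin r → ℤ, polyTranslate k m f ≠ f) ∧
    -- (b) ℤ^r/Ξ_f is torsion-free
    (∀ (m : Fin r → ℤ) (n : ℤ), 1 ≤ n →
      polyTranslate k (fun i => n * m i) f = f → polyTranslate k m f = f) := by
  constructor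
  · by_contra! h
    have hc : f = C (eval 0 f) := by
      refine MvPolynomial.funext_set (fun _ => Set.range ((↑) : ℤ → k))
        (fun _ => Set.infinite_range_of_injective Int.cast_injective) ?_
      intro x hx
      choose m hm using fun i => hx i (Set.mem_univ i)
      have hx' : x = fun i => ((m i : ℤ) : k) := funext fun i => (hm i).symm
      rw [hx', ← eval_polyTranslate, h m, eval_C]
    rcases eq_or_ne (eval 0 f) 0 with h0 | h0
    · exact hf.ne_zero (by rw [hc, h0, C_0])
    · exact hf.not_isUnit (by rw [hc]; exact (isUnit_iff_ne_zero.mpr h0).map C)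
  · intro m n hn h
    have hj : ∀ j : ℕ, polyTranslate k (fun i => ((j : ℤ) * n) * m i) f = f := by
      intro j
      induction j with
      | zero => simp [polyTranslate]
      | succ j ih =>
        nth_rewrite 2 [← ih]
        nth_rewrite 2 [← h]
        rw [polyTranslate_add]
        congr 2
        funext i
        push_cast
        ring
    have key : lineTranslate k m f = Polynomial.C f := by
      refine Polynomial.eq_of_infinite_eval_eq _ _ ?_
      refine Set.Infinite.mono (s := Set.range
        fun j : ℕ => (((j : ℤ) * n : ℤ) : MvPolynomial (Fin r) k)) ?_ ?_
      · rintro _ ⟨j, rfl⟩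
        simp only [Set.mem_ofPred_eq]
        rw [eval_lineTranslate, hj, Polynomial.eval_C]
      · refine Set.infinite_range_of_injective fun a b hab => ?_
        have h1 : (a : ℤ) * n = b * n := Int.cast_injective hab
        exact_mod_cast mul_right_cancel₀ (by omega) h1
    have := eval_lineTranslate k m 1 f
    rw [key] at this
    simpa using this.symm
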